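/- For all s > 0 and c > 0, the large-n limit of E[h_{n/2}²(‖x_n + √s Z‖ c√n / s)], where x_n = (c√n, 0, …, 0) ∈ ℝⁿ and Z ~ N(0, I_n), equals c²(c² + s)/((s/2 + sqrt(s²/4 + c²(c² + s)))². -/

import Mathlib

open MeasureTheory ProbabilityTheory Filter

/-- Modified Bessel function of the first kind of order `ν`. -/
noncomputable def besselI (ν x : ℝ) : ℝ :=
  ∑' k : ℕ, (x / 2) ^ (2 * (k : ℝ) + ν) / (k.factorial * Real.Gamma ((k : ℝ) + ν + 1))

/-- Ratio `h_ν(x) = I_ν(x) / I_{ν-1}(x)`. -/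
noncomputable def besselRatio (ν x : ℝ) : ℝ := besselI ν x / besselI (ν - 1) x

/-- Standard Gaussian measure on `ℝⁿ`. -/
noncomputable def stdGaussian (n : ℕ) : Measure (Fin n → ℝ) :=
  Measure.pi fun _ => gaussianReal 0 1

/-- Euclidean norm on `Fin n → ℝ`. -/
noncomputable def euclNorm {n : ℕ} (z : Fin n → ℝ) : ℝ := Real.sqrt (∑ i, z i ^ 2)

/-- The vector `(c√n, 0, …, 0) ∈ ℝⁿ`. -/
noncomputable def xVec (n : ℕ) (c : ℝ) : Fin n → ℝ :=
  fun i => if (i : ℕ) = 0 then c * Real.sqrt n else 0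


/-- Term of the series. -/
noncomputable def bT (ν x : ℝ) (k : ℕ) : ℝ :=
  (x / 2) ^ (2 * (k : ℝ) + ν) / (k.factorial * Real.Gamma ((k : ℝ) + ν + 1))

lemma gamma_ge (ν : ℝ) (hν : 0 ≤ ν) (k : ℕ) : Real.Gamma (ν + 1) ≤ Real.Gamma ((k : ℝ) + ν + 1) := by
  induction k with
  | zero => simp
  | succ k ih =>
    have h0 : (0 : ℝ) < (k : ℝ) + ν + 1 := by positivity
    have h := Real.Gamma_add_one h0.ne'
    have e : ((k + 1 : ℕ) : ℝ) + ν + 1 = (k : ℝ) + ν + 1 + 1 := by push_cast; ring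
    rw [e, h]
    have := Real.Gamma_pos_of_pos h0
    have hk : (0 : ℝ) ≤ k := by positivity
    nlinarith

lemma bT_nonneg (ν x : ℝ) (hν : 0 ≤ ν) (hx : 0 ≤ x) (k : ℕ) : 0 ≤ bT ν x k := by
  unfold bT
  have := Real.Gamma_pos_of_pos (show (0 : ℝ) < (k : ℝ) + ν + 1 by positivity)
  positivity

lemma bT_pos (ν x : ℝ) (hν : 0 ≤ ν) (hx : 0 < x) (k : ℕ) : 0 < bT ν x k := by
  unfold bT
  have := Real.Gamma_pos_of_pos (show (0 : ℝ) < (k : ℝ) + ν + 1 by positivity)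
  positivity

lemma bT_summable_pos (ν x : ℝ) (hν : 0 ≤ ν) (hx : 0 < x) : Summable (bT ν x) := by
  have hs := (Real.summable_pow_div_factorial ((x / 2) ^ 2)).mul_left
    ((x / 2) ^ ν / Real.Gamma (ν + 1))
  refine Summable.of_nonneg_of_le (bT_nonneg ν x hν hx.le) (fun k => ?_) hs
  have h1 := Real.Gamma_pos_of_pos (show (0 : ℝ) < ν + 1 by positivity)
  have h2 := gamma_ge ν hν k
  have e : (x / 2) ^ (2 * (k : ℝ) + ν) = ((x / 2) ^ 2) ^ k * (x / 2) ^ ν := by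
    rw [Real.rpow_add (by positivity)]
    congr 1
    rw [← pow_mul, ← Real.rpow_natCast]
    push_cast; rfl
  unfold bT
  rw [e, div_mul_div_comm, mul_comm (((x / 2) ^ 2) ^ k), mul_comm (Real.Gamma (ν + 1))]
  gcongr

lemma bT_zero (ν : ℝ) (hν : 0 < ν) (k : ℕ) : bT ν 0 k = 0 := by
  unfold bT
  rw [zero_div, Real.zero_rpow (by positivity), zero_div]

lemma bT_summable (ν x : ℝ) (hν : 0 < ν) (hx : 0 ≤ x) : Summable (bT ν x) := by
  rcases hx.eq_or_lt with h | h
  · subst h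
    have : bT ν 0 = fun _ => 0 := funext (bT_zero ν hν)
    rw [this]; exact summable_zero
  · exact bT_summable_pos ν x hν.le h

lemma besselI_pos (ν x : ℝ) (hν : 0 ≤ ν) (hx : 0 < x) : 0 < besselI ν x :=
  (bT_summable_pos ν x hν hx).tsum_pos (bT_nonneg ν x hν hx.le) 0 (bT_pos ν x hν hx 0)

lemma bessel_rec (ν x : ℝ) (hν : 1 ≤ ν) (hx : 0 < x) :
    besselI (ν - 1) x = 2 * ν / x * besselI ν x + besselI (ν + 1) x := by
  have s1 := bT_summable_pos (ν - 1) x (by linarith) hx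
  have s2 := bT_summable_pos ν x (by linarith) hx
  have hd := s1.sub (s2.mul_left (2 * ν / x))
  have key : ∀ k : ℕ, bT (ν - 1) x k - 2 * ν / x * bT ν x k
      = k * ((x / 2) ^ (2 * (k : ℝ) + ν - 1) / (k.factorial * Real.Gamma ((k : ℝ) + ν + 1))) := by
    intro k
    have h0 : (0 : ℝ) < (k : ℝ) + ν := by positivity
    have hg := Real.Gamma_pos_of_pos h0
    unfold bT
    rw [show (k : ℝ) + (ν - 1) + 1 = k + ν by ring, Real.Gamma_add_one h0.ne',
      show 2 * (k : ℝ) + (ν - 1) = 2 * (k : ℝ) + ν - 1 by ring,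
      show (x / 2) ^ (2 * (k : ℝ) + ν) = (x / 2) ^ (2 * (k : ℝ) + ν - 1) * (x / 2) by
        rw [← Real.rpow_add_one (by positivity)]; ring_nf]
    have hf : (0 : ℝ) < k.factorial := by positivity
    field_simp
    ring
  have h1 : besselI (ν - 1) x - 2 * ν / x * besselI ν x
      = ∑' k, (bT (ν - 1) x k - 2 * ν / x * bT ν x k) := by
    rw [s1.tsum_sub (s2.mul_left _), tsum_mul_left]; rfl
  rw [hd.tsum_eq_zero_add] at h1
  have h2 : ∑' k, (bT (ν - 1) x (k + 1) - 2 * ν / x * bT ν x (k + 1)) = besselI (ν + 1) x := by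
    unfold besselI
    refine tsum_congr fun k => ?_
    rw [key]
    have h0 : (0 : ℝ) < (k : ℝ) + ν := by positivity
    have hf : (0 : ℝ) < k.factorial := by positivity
    rw [Nat.factorial_succ]
    push_cast
    rw [show 2 * ((k : ℝ) + 1) + ν - 1 = 2 * (k : ℝ) + (ν + 1) by ring,
      show (k : ℝ) + 1 + ν + 1 = k + (ν + 1) + 1 by ring]
    have hg := Real.Gamma_pos_of_pos (show 0 < (k : ℝ) + (ν + 1) + 1 by positivity)
    field_simp
  rw [h2, key] at h1
  simp at h1
  linarith

/-- comparison function -/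
noncomputable def fB (ν x : ℝ) : ℝ := (Real.sqrt (ν ^ 2 + x ^ 2) - ν) / x

lemma fB_pos (ν x : ℝ) (hν : 0 ≤ ν) (hx : 0 < x) : 0 < fB ν x := by
  unfold fB
  have : ν < Real.sqrt (ν ^ 2 + x ^ 2) := Real.lt_sqrt_of_sq_lt (by nlinarith)
  exact div_pos (by linarith) hx

lemma fB_eq (ν x : ℝ) (hx : 0 < x) : fB ν x * (2 * ν / x + fB ν x) = 1 := by
  unfold fB
  have : Real.sqrt (ν ^ 2 + x ^ 2) ^ 2 = ν ^ 2 + x ^ 2 := Real.sq_sqrt (by positivity)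
  field_simp
  nlinarith

lemma fB_diff (ν x : ℝ) (hν : 1 ≤ ν) (hx : 0 < x) : fB (ν - 1) x - fB (ν + 1) x ≤ 2 / x := by
  unfold fB
  have : Real.sqrt ((ν - 1) ^ 2 + x ^ 2) ≤ Real.sqrt ((ν + 1) ^ 2 + x ^ 2) :=
    Real.sqrt_le_sqrt (by nlinarith)
  rw [← sub_div]
  gcongr
  linarith

lemma seq_lemma (u : ℕ → ℝ) (y C : ℝ) (hy : 0 ≤ y) (hC : ∀ k, u k ≤ C)
    (h : ∀ k : ℕ, u k ≤ y / (k + 1) * u (k + 1)) : u 0 ≤ 0 := by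
  have hN : ∀ N : ℕ, u 0 ≤ y ^ N / N.factorial * u N := by
    intro N
    induction N with
    | zero => simp
    | succ N ih =>
      refine ih.trans ((mul_le_mul_of_nonneg_left (h N) (by positivity)).trans_eq ?_)
      rw [Nat.factorial_succ]; push_cast
      field_simp
      ring
  have ht := (FloorSemiring.tendsto_pow_div_factorial_atTop y).mul_const C
  rw [zero_mul] at ht
  exact ge_of_tendsto' ht fun N => (hN N).trans (mul_le_mul_of_nonneg_left (hC N) (by positivity))

lemma ratio_pos (ν x : ℝ) (hν : 1 ≤ ν) (hx : 0 < x) : 0 < besselRatio ν x :=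
  div_pos (besselI_pos ν x (by linarith) hx) (besselI_pos (ν - 1) x (by linarith) hx)

lemma ratio_rec (ν x : ℝ) (hν : 1 ≤ ν) (hx : 0 < x) :
    besselRatio ν x * (2 * ν / x + besselRatio (ν + 1) x) = 1 := by
  have h := bessel_rec ν x hν hx
  have h0 := besselI_pos ν x (by linarith) hx
  have h1 := besselI_pos (ν - 1) x (by linarith) hx
  unfold besselRatio
  rw [show ν + 1 - 1 = ν by ring]
  have : 2 * ν / x + besselI (ν + 1) x / besselI ν x = besselI (ν - 1) x / besselI ν x := by
    rw [h]; field_simp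
  rw [this]
  field_simp

/-- deviation -/
noncomputable def dev (ν x : ℝ) : ℝ :=
  max 0 (max (fB ν x - besselRatio ν x) (besselRatio ν x - fB (ν - 1) x))

lemma le_inv_of (p a q : ℝ) (hp : 0 < p) (hq : 0 < q) (h : p * (a + q) = 1) : p * a ≤ 1 := by
  nlinarith

lemma step (ν x : ℝ) (hν : 1 ≤ ν) (hx : 0 < x) :
    dev ν x ≤ (x / (2 * ν)) ^ 2 * dev (ν + 1) x := by
  have hR := ratio_rec ν x hν hx
  have hp := ratio_pos ν x hν hx
  have hp' := ratio_pos (ν + 1) x (by linarith) hx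
  have f0 := fB_pos ν x (by linarith) hx
  have f1 := fB_pos (ν + 1) x (by linarith) hx
  have fm := fB_pos (ν - 1) x (by linarith) hx
  have e0 := fB_eq ν x hx
  have em := fB_eq (ν - 1) x hx
  have hdif := fB_diff ν x hν hx
  have d0 : 0 ≤ dev (ν + 1) x := le_max_left _ _
  have d1 : fB (ν + 1) x - besselRatio (ν + 1) x ≤ dev (ν + 1) x :=
    (le_max_left _ _).trans (le_max_right _ _)
  have d2 : besselRatio (ν + 1) x - fB ν x ≤ dev (ν + 1) x := by
    have : besselRatio (ν + 1) x - fB (ν + 1 - 1) x ≤ dev (ν + 1) x :=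
      (le_max_right _ _).trans (le_max_right _ _)
    rwa [show ν + 1 - 1 = ν by ring] at this
  set D := dev (ν + 1) x
  have ea : x / (2 * ν) = (2 * ν / x)⁻¹ := by rw [inv_div]
  have ha : 0 < 2 * ν / x := by positivity
  have em' : fB (ν - 1) x * (2 * ν / x - 2 / x + fB (ν - 1) x) = 1 := by
    linear_combination em
  rw [ea]
  generalize 2 * ν / x = a at *
  have bnd : ∀ p q : ℝ, 0 < p → 0 < q → p * (a + q) = 1 → p ≤ a⁻¹ := by
    intro p q h1 h2 h3
    rw [le_inv_comm₀ h1 ha, inv_eq_of_mul_eq_one_right h3]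
    linarith
  have b1 := bnd _ _ hp hp' hR
  have b2 := bnd _ _ f0 f0 e0
  unfold dev
  refine max_le (by positivity) (max_le ?_ ?_)
  · have : fB ν x - besselRatio ν x
        = fB ν x * besselRatio ν x * (besselRatio (ν + 1) x - fB ν x) := by
      linear_combination (fB ν x) * (-hR) + besselRatio ν x * e0
    rw [this]
    calc _ ≤ fB ν x * besselRatio ν x * D := by gcongr
      _ ≤ a⁻¹ * a⁻¹ * D := by gcongr
      _ = _ := by ring
  · have hg : (a + fB (ν + 1) x)⁻¹ * (a + fB (ν + 1) x) = 1 := inv_mul_cancel₀ (by positivity)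
    have hg0 : 0 < (a + fB (ν + 1) x)⁻¹ := by positivity
    have hle : (a + fB (ν + 1) x)⁻¹ ≤ fB (ν - 1) x := by
      rw [inv_le_comm₀ (by positivity) fm, inv_eq_of_mul_eq_one_right em']
      linarith
    have b3 := bnd _ _ hg0 f1 hg
    set g := (a + fB (ν + 1) x)⁻¹
    have : besselRatio ν x - g = besselRatio ν x * g * (fB (ν + 1) x - besselRatio (ν + 1) x) := by
      linear_combination g * hR - besselRatio ν x * hg
    calc _ ≤ besselRatio ν x - g := by linarith
      _ = _ := this
      _ ≤ besselRatio ν x * g * D := by gcongr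
      _ ≤ a⁻¹ * a⁻¹ * D := by gcongr
      _ = _ := by ring

lemma dev_le (ν x : ℝ) (hν : 1 ≤ ν) (hx : 0 < x) : dev ν x ≤ x / 2 := by
  have bnd : ∀ p q : ℝ, 0 < p → 0 < q → p * (2 * ν / x + q) = 1 → p ≤ x / 2 := by
    intro p q h1 h2 h3
    have := le_inv_of _ _ _ h1 h2 h3
    rw [mul_div_assoc', div_le_one hx] at this
    nlinarith
  have b1 := bnd _ _ (ratio_pos ν x hν hx) (ratio_pos (ν + 1) x (by linarith) hx) (ratio_rec ν x hν hx)
  have f0 := fB_pos ν x (by linarith) hx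
  have b2 := bnd _ _ f0 f0 (fB_eq ν x hx)
  have fm := fB_pos (ν - 1) x (by linarith) hx
  have hp := ratio_pos ν x hν hx
  exact max_le (by positivity) (max_le (by linarith) (by linarith))

lemma dev_zero (ν x : ℝ) (hν : 1 ≤ ν) (hx : 0 < x) : dev ν x ≤ 0 := by
  have := seq_lemma (fun k => dev (ν + k) x) ((x / 2) ^ 2) (x / 2) (by positivity)
    (fun k => dev_le _ x (by have : (0 : ℝ) ≤ k := by positivity
                             linarith) hx)
    (fun k => ?_)
  · simpa using this
  · have hk : (0 : ℝ) ≤ k := by positivity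
    refine (step (ν + k) x (by linarith) hx).trans ?_
    have e : ν + ((k + 1 : ℕ) : ℝ) = ν + k + 1 := by push_cast; ring
    simp only [e]
    refine mul_le_mul_of_nonneg_right ?_ (le_max_left _ _)
    rw [← div_div, div_pow]
    gcongr
    nlinarith

lemma sandwich (ν x : ℝ) (hν : 1 ≤ ν) (hx : 0 < x) :
    fB ν x ≤ besselRatio ν x ∧ besselRatio ν x ≤ fB (ν - 1) x := by
  have h := dev_zero ν x hν hx
  have h1 : fB ν x - besselRatio ν x ≤ dev ν x := (le_max_left _ _).trans (le_max_right _ _)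
  have h2 : besselRatio ν x - fB (ν - 1) x ≤ dev ν x := (le_max_right _ _).trans (le_max_right _ _)
  constructor <;> linarith

lemma fB_sq (ν x : ℝ) (hν : 0 ≤ ν) (hx : 0 < x) :
    fB ν x ^ 2 = 1 - 2 * ν / (Real.sqrt (ν ^ 2 + x ^ 2) + ν) := by
  unfold fB
  have h : Real.sqrt (ν ^ 2 + x ^ 2) ^ 2 = ν ^ 2 + x ^ 2 := Real.sq_sqrt (by positivity)
  have hp : 0 < Real.sqrt (ν ^ 2 + x ^ 2) := Real.sqrt_pos.2 (by positivity)
  generalize Real.sqrt (ν ^ 2 + x ^ 2) = w at *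
  have : 0 < w + ν := by positivity
  have hx2 : x ^ 2 = (w - ν) * (w + ν) := by linear_combination -h
  rw [div_pow, div_eq_iff (by positivity), hx2]
  field_simp
  ring

lemma ratio_sq (ν x : ℝ) (hν : 1 < ν) (hx : 0 ≤ x) :
    |besselRatio ν x ^ 2 - (1 - 2 * ν / (Real.sqrt (ν ^ 2 + x ^ 2) + ν))| ≤ 1 / ν := by
  rcases hx.eq_or_lt with h | h
  · subst h
    have : besselI ν 0 = 0 := by
      have : ∀ k, bT ν 0 k = 0 := bT_zero ν (by linarith)
      unfold besselI
      refine (tsum_congr this).trans tsum_zero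
    unfold besselRatio
    rw [this]
    have : Real.sqrt (ν ^ 2 + 0 ^ 2) = ν := by
      rw [zero_pow two_ne_zero, add_zero]; exact Real.sqrt_sq (by linarith)
    rw [this]
    have : 2 * ν / (ν + ν) = 1 := by rw [← two_mul]; exact div_self (by linarith)
    rw [this]; simp; linarith
  · obtain ⟨h1, h2⟩ := sandwich ν x hν.le h
    have f0 := fB_pos ν x (by linarith) h
    have g1 : fB ν x ^ 2 ≤ besselRatio ν x ^ 2 := by gcongr
    have g2 : besselRatio ν x ^ 2 ≤ fB (ν - 1) x ^ 2 := by
      have := ratio_pos ν x hν.le h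
      gcongr
    rw [← fB_sq ν x (by linarith) h, abs_le]
    constructor
    · have : 0 < 1 / ν := by positivity
      linarith
    · have : fB (ν - 1) x ^ 2 - fB ν x ^ 2 ≤ 1 / ν := by
        rw [fB_sq ν x (by linarith) h, fB_sq (ν - 1) x (by linarith) h]
        have hw : Real.sqrt ((ν - 1) ^ 2 + x ^ 2) ≤ Real.sqrt (ν ^ 2 + x ^ 2) :=
          Real.sqrt_le_sqrt (by nlinarith)
        have hw1 : ν ≤ Real.sqrt (ν ^ 2 + x ^ 2) := Real.le_sqrt_of_sq_le (by nlinarith)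
        have i1 : 2 * (ν - 1) / (Real.sqrt (ν ^ 2 + x ^ 2) + ν)
            ≤ 2 * (ν - 1) / (Real.sqrt ((ν - 1) ^ 2 + x ^ 2) + (ν - 1)) := by
          have : 0 < ν - 1 := by linarith
          gcongr
          linarith
        have i2 : 2 * ν / (Real.sqrt (ν ^ 2 + x ^ 2) + ν)
            - 2 * (ν - 1) / (Real.sqrt (ν ^ 2 + x ^ 2) + ν) ≤ 1 / ν := by
          rw [← sub_div, div_le_div_iff₀ (by linarith) (by linarith)]
          nlinarith
        linarith
      linarith

lemma besselI_meas {Ω : Type*} [MeasurableSpace Ω] (ν : ℝ) (hν : 0 < ν) (g : Ω → ℝ)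
    (hg : Measurable g) (h0 : ∀ ω, 0 ≤ g ω) : Measurable fun ω => besselI ν (g ω) := by
  refine measurable_of_tendsto_metrizable (f := fun N ω => ∑ k ∈ Finset.range N, bT ν (g ω) k) ?_ ?_
  · intro N
    refine Finset.measurable_sum _ fun k _ => ?_
    unfold bT
    fun_prop
  · rw [tendsto_pi_nhds]
    intro ω
    exact (bT_summable ν (g ω) hν (h0 ω)).hasSum.tendsto_sum_nat

/-- limiting function -/
noncomputable def FL (s c u : ℝ) : ℝ := 1 - s / (s / 2 + Real.sqrt (s ^ 2 / 4 + c ^ 2 * u))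

lemma FL_eq (s c : ℝ) (hs : 0 < s) (hc : 0 < c) : FL s c (c ^ 2 + s) = c ^ 2 * (c ^ 2 + s) /
        (s / 2 + Real.sqrt (s ^ 2 / 4 + c ^ 2 * (c ^ 2 + s))) ^ 2 := by
  unfold FL
  have h : Real.sqrt (s ^ 2 / 4 + c ^ 2 * (c ^ 2 + s)) ^ 2 = s ^ 2 / 4 + c ^ 2 * (c ^ 2 + s) :=
    Real.sq_sqrt (by positivity)
  have hp := Real.sqrt_nonneg (s ^ 2 / 4 + c ^ 2 * (c ^ 2 + s))
  generalize Real.sqrt (s ^ 2 / 4 + c ^ 2 * (c ^ 2 + s)) = w at *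
  have : 0 < s / 2 + w := by positivity
  rw [eq_div_iff (by positivity)]
  field_simp
  nlinarith

lemma FL_lip (s c u v : ℝ) (hs : 0 < s) (hu : 0 ≤ u) (hv : 0 ≤ v) :
    |FL s c u - FL s c v| ≤ c ^ 2 / s ^ 2 * |u - v| := by
  unfold FL
  have h : Real.sqrt (s ^ 2 / 4 + c ^ 2 * u) ^ 2 = s ^ 2 / 4 + c ^ 2 * u :=
    Real.sq_sqrt (by positivity)
  have hp : s / 2 ≤ Real.sqrt (s ^ 2 / 4 + c ^ 2 * u) :=
    Real.le_sqrt_of_sq_le (by nlinarith [mul_nonneg (sq_nonneg c) hu])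
  have h' : Real.sqrt (s ^ 2 / 4 + c ^ 2 * v) ^ 2 = s ^ 2 / 4 + c ^ 2 * v :=
    Real.sq_sqrt (by positivity)
  have hp' : s / 2 ≤ Real.sqrt (s ^ 2 / 4 + c ^ 2 * v) :=
    Real.le_sqrt_of_sq_le (by nlinarith [mul_nonneg (sq_nonneg c) hv])
  generalize Real.sqrt (s ^ 2 / 4 + c ^ 2 * u) = w at *
  generalize Real.sqrt (s ^ 2 / 4 + c ^ 2 * v) = w' at *
  have a1 : 0 < s / 2 + w := by linarith
  have a2 : 0 < s / 2 + w' := by linarith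
  have a3 : 0 < w + w' := by linarith
  have e : (1 - s / (s / 2 + w)) - (1 - s / (s / 2 + w'))
      = s * (c ^ 2 * (u - v)) / ((s / 2 + w) * (s / 2 + w') * (w + w')) := by
    have : c ^ 2 * (u - v) = (w - w') * (w + w') := by linear_combination h' - h
    rw [this]
    rw [show w - w' = (s / 2 + w) - (s / 2 + w') by ring]
    generalize s / 2 + w = A at *
    generalize s / 2 + w' = B at *
    generalize w + w' = G at *
    field_simp
    ring
  rw [e, abs_div, abs_mul, abs_mul, abs_of_pos hs, abs_of_nonneg (sq_nonneg c),
    abs_of_pos (show 0 < (s / 2 + w) * (s / 2 + w') * (w + w') by positivity)]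
  have l : s * s * s ≤ (s / 2 + w) * (s / 2 + w') * (w + w') := by
    gcongr <;> linarith
  calc _ ≤ s * (c ^ 2 * |u - v|) / (s * s * s) := by gcongr
    _ = _ := by field_simp

/-- centered summand -/
noncomputable def XC (s a t : ℝ) : ℝ := 2 * Real.sqrt s * a * t + s * (t ^ 2 - 1)

lemma gauss_memLp (p : NNReal) : MemLp (fun t : ℝ => t) p (gaussianReal 0 1) :=
  memLp_id_gaussianReal p

lemma gauss_pow (k : ℕ) : Integrable (fun t : ℝ => t ^ k) (gaussianReal 0 1) := by
  rcases Nat.eq_zero_or_pos k with h | h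
  · subst h; simp
  · have := (gauss_memLp k).integrable_norm_pow (by simpa using h.ne')
    refine (integrable_norm_iff (by fun_prop)).1 ?_
    simpa using this

lemma gauss_two : ∫ t : ℝ, t ^ 2 ∂(gaussianReal 0 1) = 1 := by
  have h := variance_id_gaussianReal (μ := 0) (v := 1)
  rw [variance_of_integral_eq_zero (by fun_prop) (by simp)] at h
  simpa using h

lemma XC_memLp (s a : ℝ) : MemLp (XC s a) 2 (gaussianReal 0 1) := by
  rw [memLp_two_iff_integrable_sq (by unfold XC; fun_prop)]
  have : (fun t => XC s a t ^ 2) = fun t => s ^ 2 * t ^ 4 + 4 * s * Real.sqrt s * a * t ^ 3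
      + (4 * (Real.sqrt s) ^ 2 * a ^ 2 - 2 * s ^ 2) * t ^ 2
      - 4 * s * Real.sqrt s * a * t ^ 1 + s ^ 2 * t ^ 0 := by
    ext t; unfold XC; ring
  rw [this]
  exact (((((gauss_pow 4).const_mul _).add ((gauss_pow 3).const_mul _)).add
    ((gauss_pow 2).const_mul _)).sub ((gauss_pow 1).const_mul _)).add ((gauss_pow 0).const_mul _)

lemma XC_int (s a : ℝ) : ∫ t, XC s a t ∂(gaussianReal 0 1) = 0 := by
  unfold XC
  have h1 : Integrable (fun t : ℝ => t) (gaussianReal 0 1) := by simpa using gauss_pow 1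
  have h2 : Integrable (fun t : ℝ => s * (t ^ 2 - 1)) (gaussianReal 0 1) :=
    ((gauss_pow 2).sub (integrable_const _)).const_mul _
  rw [integral_add (h1.const_mul _) h2,
    integral_const_mul, integral_const_mul, integral_sub (gauss_pow 2) (integrable_const _),
    gauss_two]
  have : ∫ t : ℝ, t ∂(gaussianReal 0 1) = 0 := integral_id_gaussianReal
  rw [this]; simp

/-- fourth moment constant -/
noncomputable def VG : ℝ := ∫ t : ℝ, (t ^ 2 - 1) ^ 2 ∂(gaussianReal 0 1)

lemma XC_var (s a : ℝ) (hs : 0 < s) :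
    variance (XC s a) (gaussianReal 0 1) ≤ 8 * s * a ^ 2 + 2 * s ^ 2 * VG := by
  rw [variance_of_integral_eq_zero (XC_memLp s a).aestronglyMeasurable.aemeasurable (XC_int s a)]
  have hi : Integrable (fun t : ℝ => (t ^ 2 - 1) ^ 2) (gaussianReal 0 1) := by
    have : (fun t : ℝ => (t ^ 2 - 1) ^ 2) = fun t => t ^ 4 - 2 * t ^ 2 + t ^ 0 := by
      ext t; ring
    rw [this]
    exact ((gauss_pow 4).sub ((gauss_pow 2).const_mul _)).add (gauss_pow 0)
  calc _ ≤ ∫ t, (8 * s * a ^ 2 * t ^ 2 + 2 * s ^ 2 * (t ^ 2 - 1) ^ 2) ∂(gaussianReal 0 1) := by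
        refine integral_mono (XC_memLp s a).integrable_sq
          (((gauss_pow 2).const_mul _).add (hi.const_mul _)) fun t => ?_
        simp only [XC]
        have := Real.sq_sqrt hs.le
        have e : 8 * s * a ^ 2 * t ^ 2 = 2 * (2 * Real.sqrt s * a * t) ^ 2 := by
          rw [mul_pow, mul_pow, mul_pow, this]; ring
        rw [e]
        nlinarith [sq_nonneg (2 * Real.sqrt s * a * t - s * (t ^ 2 - 1))]
    _ = _ := by
        rw [integral_add ((gauss_pow 2).const_mul _) (hi.const_mul _), integral_const_mul,
          integral_const_mul, gauss_two, VG, mul_one]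

/-- the normalized squared norm -/
noncomputable def UU (n : ℕ) (s c : ℝ) (z : Fin n → ℝ) : ℝ :=
  (∑ i, (xVec n c i + Real.sqrt s * z i) ^ 2) / n

lemma xVec_sum (n : ℕ) (c : ℝ) (hn : 0 < n) : ∑ i, xVec n c i ^ 2 = c ^ 2 * n := by
  obtain ⟨m, rfl⟩ : ∃ m, n = m + 1 := ⟨n - 1, by omega⟩
  rw [Fin.sum_univ_succ]
  have h0 : ∀ i : Fin m, xVec (m + 1) c i.succ = 0 := by
    intro i; simp [xVec]
  simp only [h0]
  simp only [xVec, Fin.val_zero, if_true, mul_pow]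
  rw [Real.sq_sqrt (by positivity)]
  simp

lemma UU_eq (n : ℕ) (s c : ℝ) (hs : 0 < s) (hn : 0 < n) (z : Fin n → ℝ) :
    UU n s c z - (c ^ 2 + s) = (∑ i, XC s (xVec n c i) (z i)) / n := by
  have hn' : (0 : ℝ) < n := by exact_mod_cast hn
  have : ∑ i, (xVec n c i + Real.sqrt s * z i) ^ 2
      = ∑ i, XC s (xVec n c i) (z i) + ∑ i, xVec n c i ^ 2 + ∑ i : Fin n, s := by
    rw [← Finset.sum_add_distrib, ← Finset.sum_add_distrib]
    refine Finset.sum_congr rfl fun i _ => ?_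
    unfold XC
    have := Real.sq_sqrt hs.le
    linear_combination (z i) ^ 2 * this
  unfold UU
  rw [this, xVec_sum n c hn]
  simp
  field_simp
  ring

lemma eval_memLp (n : ℕ) (s c : ℝ) (i : Fin n) :
    MemLp (fun z : Fin n → ℝ => XC s (xVec n c i) (z i)) 2 (stdGaussian n) :=
  (XC_memLp s (xVec n c i)).comp_measurePreserving
    (measurePreserving_eval (fun _ : Fin n => gaussianReal 0 1) i)

lemma S_memLp (n : ℕ) (s c : ℝ) :
    MemLp (fun z : Fin n → ℝ => ∑ i, XC s (xVec n c i) (z i)) 2 (stdGaussian n) :=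
  memLp_finsetSum _ fun i _ => eval_memLp n s c i

instance (n : ℕ) : IsProbabilityMeasure (stdGaussian n) := by
  unfold _root_.stdGaussian; infer_instance

lemma S_int (n : ℕ) (s c : ℝ) :
    ∫ z : Fin n → ℝ, ∑ i, XC s (xVec n c i) (z i) ∂(stdGaussian n) = 0 := by
  rw [integral_finsetSum _ fun i _ => (eval_memLp n s c i).integrable (by norm_num)]
  refine Finset.sum_eq_zero fun i _ => ?_
  unfold _root_.stdGaussian
  rw [integral_comp_eval (μ := fun _ : Fin n => gaussianReal 0 1)
    (f := XC s (xVec n c i)) (XC_memLp s _).aestronglyMeasurable, XC_int]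

lemma S_sq (n : ℕ) (s c : ℝ) (hs : 0 < s) (hn : 0 < n) :
    ∫ z : Fin n → ℝ, (∑ i, XC s (xVec n c i) (z i)) ^ 2 ∂(stdGaussian n)
      ≤ (8 * s * c ^ 2 + 2 * s ^ 2 * VG) * n := by
  have h := variance_sum_pi (μ := fun _ : Fin n => gaussianReal 0 1)
    (X := fun i => XC s (xVec n c i)) (fun i => XC_memLp s _)
  have e : (∑ i, fun ω : Fin n → ℝ => XC s (xVec n c i) (ω i))
      = fun z : Fin n → ℝ => ∑ i, XC s (xVec n c i) (z i) := by
    ext z; simp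
  rw [e] at h
  have h2 := variance_of_integral_eq_zero (S_memLp n s c).aestronglyMeasurable.aemeasurable
    (S_int n s c)
  rw [← h2]
  change variance _ (Measure.pi _) ≤ _
  rw [h]
  refine (Finset.sum_le_sum fun i _ => XC_var s (xVec n c i) hs).trans ?_
  rw [Finset.sum_add_distrib, ← Finset.mul_sum, xVec_sum n c hn]
  simp
  apply le_of_eq
  ring

lemma pointwise (n : ℕ) (s c : ℝ) (hs : 0 < s) (hc : 0 < c) (hn : 3 ≤ n) (z : Fin n → ℝ) :
    |(besselRatio ((n : ℝ) / 2)
            (euclNorm (fun i => xVec n c i + Real.sqrt s * z i) * (c * Real.sqrt n) / s)) ^ 2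
      - FL s c (c ^ 2 + s)| ≤ 2 / n + c ^ 2 / s ^ 2 *
        ((1 / Real.sqrt n + Real.sqrt n * (UU n s c z - (c ^ 2 + s)) ^ 2) / 2) := by
  have hn' : (3 : ℝ) ≤ n := by exact_mod_cast hn
  have hn0 : (0 : ℝ) < n := by linarith
  have hx0 : 0 ≤ euclNorm (fun i => xVec n c i + Real.sqrt s * z i) * (c * Real.sqrt n) / s := by
    unfold euclNorm; positivity
  have hU : 0 ≤ UU n s c z := by unfold UU; positivity
  have h1 := ratio_sq ((n : ℝ) / 2) _ (by linarith) hx0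
  have hx2 : (euclNorm (fun i => xVec n c i + Real.sqrt s * z i) * (c * Real.sqrt n) / s) ^ 2
      = (n / s) ^ 2 * (c ^ 2 * UU n s c z) := by
    unfold euclNorm UU
    rw [div_pow, mul_pow, mul_pow, Real.sq_sqrt (by positivity), Real.sq_sqrt (by positivity)]
    field_simp
  have e : 1 - 2 * ((n : ℝ) / 2) / (Real.sqrt (((n : ℝ) / 2) ^ 2 +
      (euclNorm (fun i => xVec n c i + Real.sqrt s * z i) * (c * Real.sqrt n) / s) ^ 2) + (n : ℝ) / 2)
      = FL s c (UU n s c z) := by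
    rw [hx2]
    have : ((n : ℝ) / 2) ^ 2 + (n / s) ^ 2 * (c ^ 2 * UU n s c z)
        = (n / s) ^ 2 * (s ^ 2 / 4 + c ^ 2 * UU n s c z) := by
      field_simp; ring
    rw [this, Real.sqrt_mul (by positivity), Real.sqrt_sq (by positivity)]
    unfold FL
    have hw := Real.sqrt_nonneg (s ^ 2 / 4 + c ^ 2 * UU n s c z)
    generalize Real.sqrt (s ^ 2 / 4 + c ^ 2 * UU n s c z) = w at *
    have e2 : n / s * w + (n : ℝ) / 2 = n / s * (s / 2 + w) := by field_simp; ring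
    have : 0 < s / 2 + w := by positivity
    rw [e2]
    generalize s / 2 + w = A at *
    field_simp
  rw [e] at h1
  have h2 := FL_lip s c (UU n s c z) (c ^ 2 + s) hs hU (by positivity)
  have h3 : |UU n s c z - (c ^ 2 + s)| ≤
      (1 / Real.sqrt n + Real.sqrt n * (UU n s c z - (c ^ 2 + s)) ^ 2) / 2 := by
    have hr : 0 < Real.sqrt n := Real.sqrt_pos.2 hn0
    rw [← sq_abs (UU n s c z - (c ^ 2 + s))]
    generalize |UU n s c z - (c ^ 2 + s)| = t
    generalize Real.sqrt (n : ℝ) = r at *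
    have : 1 / r + r * t ^ 2 - 2 * t = (1 - r * t) ^ 2 / r := by field_simp; ring
    have : 0 ≤ (1 - r * t) ^ 2 / r := by positivity
    linarith
  have h4 := mul_le_mul_of_nonneg_left h3 (show 0 ≤ c ^ 2 / s ^ 2 by positivity)
  have e5 : 1 / ((n : ℝ) / 2) = 2 / n := by rw [one_div_div]
  rw [e5] at h1
  refine (abs_sub_le _ (FL s c (UU n s c z)) _).trans ?_
  linarith

theorem limit_h_sq_shifted (s c : ℝ) (hs : 0 < s) (hc : 0 < c) :
    Tendsto (fun n : ℕ =>
        ∫ z, (besselRatio ((n : ℝ) / 2)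
            (euclNorm (fun i => xVec n c i + Real.sqrt s * z i) * (c * Real.sqrt n) / s)) ^ 2
          ∂(stdGaussian n))
      atTop
      (nhds (c ^ 2 * (c ^ 2 + s) /
        (s / 2 + Real.sqrt (s ^ 2 / 4 + c ^ 2 * (c ^ 2 + s))) ^ 2)) := by
  rw [← FL_eq s c hs hc]
  set CC := 8 * s * c ^ 2 + 2 * s ^ 2 * VG with hCC
  have hlim : Tendsto (fun n : ℕ => 2 / (n : ℝ) + c ^ 2 / s ^ 2 *
      ((1 + CC) / 2 * (1 / Real.sqrt n))) atTop (nhds 0) := by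
    have t1 : Tendsto (fun n : ℕ => 2 / (n : ℝ)) atTop (nhds 0) :=
      tendsto_const_div_atTop_nhds_zero_nat 2
    have t2 : Tendsto (fun n : ℕ => 1 / Real.sqrt n) atTop (nhds 0) := by
      simp only [one_div]
      exact tendsto_inv_atTop_zero.comp (Real.tendsto_sqrt_atTop.comp tendsto_natCast_atTop_atTop)
    simpa using t1.add ((t2.const_mul ((1 + CC) / 2)).const_mul (c ^ 2 / s ^ 2))
  rw [tendsto_iff_norm_sub_tendsto_zero]
  refine squeeze_zero' (Eventually.of_forall fun _ => norm_nonneg _) ?_ hlim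
  filter_upwards [eventually_ge_atTop 3] with n hn
  have hn' : (3 : ℝ) ≤ n := by exact_mod_cast hn
  have hn0 : (0 : ℝ) < n := by linarith
  have hpt := pointwise n s c hs hc hn
  have hUi : Integrable (fun z => (UU n s c z - (c ^ 2 + s)) ^ 2) (stdGaussian n) := by
    simp only [UU_eq n s c hs (by omega), div_pow]
    exact (S_memLp n s c).integrable_sq.div_const _
  have hUb : ∫ z, (UU n s c z - (c ^ 2 + s)) ^ 2 ∂(stdGaussian n) ≤ CC / n := by
    simp only [UU_eq n s c hs (by omega), div_pow]
    rw [integral_div, div_le_div_iff₀ (by positivity) hn0]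
    have := mul_le_mul_of_nonneg_right (S_sq n s c hs (by omega)) hn0.le
    refine this.trans_eq ?_
    rw [hCC]; ring
  have hB : Integrable (fun z => 2 / n + c ^ 2 / s ^ 2 *
        ((1 / Real.sqrt n + Real.sqrt n * (UU n s c z - (c ^ 2 + s)) ^ 2) / 2))
        (stdGaussian n) :=
    (integrable_const _).add ((((integrable_const _).add (hUi.const_mul _)).div_const _).const_mul _)
  have hmeas : Measurable fun z : Fin n → ℝ => (besselRatio ((n : ℝ) / 2)
      (euclNorm (fun i => xVec n c i + Real.sqrt s * z i) * (c * Real.sqrt n) / s)) ^ 2 := by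
    have hg : Measurable fun z : Fin n → ℝ =>
        euclNorm (fun i => xVec n c i + Real.sqrt s * z i) * (c * Real.sqrt n) / s := by
      unfold euclNorm
      fun_prop
    have hg0 : ∀ z : Fin n → ℝ,
        0 ≤ euclNorm (fun i => xVec n c i + Real.sqrt s * z i) * (c * Real.sqrt n) / s := by
      intro z; unfold euclNorm; positivity
    unfold besselRatio
    exact ((besselI_meas _ (by linarith) _ hg hg0).div
      (besselI_meas _ (by linarith) _ hg hg0)).pow_const 2
  have hdi : Integrable (fun z : Fin n → ℝ => (besselRatio ((n : ℝ) / 2)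
      (euclNorm (fun i => xVec n c i + Real.sqrt s * z i) * (c * Real.sqrt n) / s)) ^ 2
      - FL s c (c ^ 2 + s)) (stdGaussian n) :=
    hB.mono' (hmeas.sub_const _).aestronglyMeasurable (Eventually.of_forall hpt)
  have hi : Integrable (fun z : Fin n → ℝ => (besselRatio ((n : ℝ) / 2)
      (euclNorm (fun i => xVec n c i + Real.sqrt s * z i) * (c * Real.sqrt n) / s)) ^ 2)
      (stdGaussian n) := by
    refine (hdi.add (integrable_const (FL s c (c ^ 2 + s)))).congr (Eventually.of_forall fun z => ?_)
    simp
  have e : (∫ z, (besselRatio ((n : ℝ) / 2)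
      (euclNorm (fun i => xVec n c i + Real.sqrt s * z i) * (c * Real.sqrt n) / s)) ^ 2
      ∂(stdGaussian n)) - FL s c (c ^ 2 + s) = ∫ z, ((besselRatio ((n : ℝ) / 2)
      (euclNorm (fun i => xVec n c i + Real.sqrt s * z i) * (c * Real.sqrt n) / s)) ^ 2
      - FL s c (c ^ 2 + s)) ∂(stdGaussian n) := by
    rw [integral_sub hi (integrable_const _)]; simp
  rw [e]
  refine (norm_integral_le_of_norm_le hB (Eventually.of_forall hpt)).trans ?_
  have hB2 : Integrable (fun z => c ^ 2 / s ^ 2 *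
        ((1 / Real.sqrt n + Real.sqrt n * (UU n s c z - (c ^ 2 + s)) ^ 2) / 2))
        (stdGaussian n) :=
    (((integrable_const _).add (hUi.const_mul _)).div_const _).const_mul _
  rw [integral_add (integrable_const _) hB2, integral_const_mul,
    integral_div, integral_div, integral_add (integrable_const _) (hUi.const_mul _), integral_const_mul]
  simp only [integral_const, probReal_univ, smul_eq_mul, one_mul]
  have hr : 0 < Real.sqrt n := Real.sqrt_pos.2 hn0
  have hb := mul_le_mul_of_nonneg_left hUb hr.le
  have hsq : Real.sqrt n * (CC / n) = CC * (1 / Real.sqrt n) := by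
    have := Real.sq_sqrt hn0.le
    field_simp
    rw [this]
    ring
  rw [hsq] at hb
  gcongr
  linarith
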